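/- Let k, ℓ and i be positive integers with i ≥ 2, let G be a {K*_k, S*_ℓ}-free graph, and let a be a vertex of G. Let t be a positive integer such that every independent subset of N^{i−1}_G(a) is dominated by some set of at most t vertices of N^{i−2}_G(a). If X ⊆ N^i_G(a) is an independent set and U is a minimal subset of N^{i−1}_G(a) dominating X, then |U| ≤ R(k, (ℓ−1)t + 1) − 1. -/

import Mathlib

/-!
Suppose `|U| ≥ R(k, (ℓ-1)t + 1)`. By minimality every `u ∈ U` has a *private neighbour* `p u ∈ X`,
adjacent to `u` and to no other vertex of `U` (`exists_private_neighbor`). Ramsey's theorem gives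
one of two configurations inside `U`.

* A clique of size `k`. Together with its private neighbours, which are pairwise non-adjacent since
  they lie in `X`, it induces `K*_k` (`nonempty_Kstar_embedding`).
* An independent set `B` of size `(ℓ-1)t + 1`. It is dominated by at most `t` vertices at distance
  `i - 2` from `a`, so one of them, `w`, is adjacent to `ℓ` vertices of `B`. Distances from `a`
  differ by at most one along an edge, so `w` has no neighbour in `X`; hence `w`, these `ℓ`
  vertices and their private neighbours induce `S*_ℓ` (`nonempty_Sstar_embedding`).

As `ramsey` is an infimum in `ℕ`, which would be `0` for an empty set, the finite Ramsey theorem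
itself (`exists_ramsey_bound`) is also needed.
-/

open SimpleGraph Finset

/-- A set `U` dominates a set `Y` in the graph `G`:
every vertex of `Y` is in the closed neighborhood of some vertex of `U`. -/
def Dominates {V : Type} (G : SimpleGraph V) (U Y : Set V) : Prop :=
  ∀ y ∈ Y, ∃ u ∈ U, u = y ∨ G.Adj u y

/-- The domination number of a finite graph. -/
noncomputable def domNum {V : Type} [Fintype V] (G : SimpleGraph V) : ℕ :=
  sInf {n | ∃ S : Set V, S.ncard = n ∧ Dominates G S Set.univ}

/-- The graph `K*_n`: a complete graph on `x₁,…,xₙ` (the `inl` vertices)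
together with a pendant vertex `yᵢ` (the `inr` vertices) attached to each `xᵢ`. -/
def Kstar (n : ℕ) : SimpleGraph (Fin n ⊕ Fin n) :=
  SimpleGraph.fromRel (fun a b => match a, b with
    | Sum.inl _, Sum.inl _ => True
    | Sum.inl i, Sum.inr j => i = j
    | _, _ => False)

/-- The graph `S*_n`: a star with center `x` (= `none`), leaves `yᵢ` (= `some (inl i)`),
with every edge subdivided by `zᵢ` (= `some (inr i)`): edges `x yᵢ` and `yᵢ zᵢ`. -/
def Sstar (n : ℕ) : SimpleGraph (Option (Fin n ⊕ Fin n)) :=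
  SimpleGraph.fromRel (fun a b => match a, b with
    | none, some (Sum.inl _) => True
    | some (Sum.inl i), some (Sum.inr j) => i = j
    | _, _ => False)

/-- `N^i_G(a)`: the set of vertices at distance exactly `i` from `a` in `G`. -/
def sphere {V : Type} (G : SimpleGraph V) (a : V) (i : ℕ) : Set V :=
  {v | G.Reachable a v ∧ G.dist a v = i}

/-- An independent set of vertices. -/
def Indep {V : Type} (G : SimpleGraph V) (X : Set V) : Prop :=
  ∀ x ∈ X, ∀ y ∈ X, x ≠ y → ¬ G.Adj x y

/-- `N` vertices suffice to force a clique of size `s` or an independent set of size `t`. -/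
def RamseyProp (N s t : ℕ) : Prop :=
  ∀ G : SimpleGraph (Fin N),
    (∃ A : Finset (Fin N), G.IsNClique s A) ∨ (∃ B : Finset (Fin N), Gᶜ.IsNClique t B)

/-- The Ramsey number `R(s,t)`. -/
noncomputable def ramsey (s t : ℕ) : ℕ := sInf {N | RamseyProp N s t}

/-- The function `g_{k,ℓ}` with `g(1) = 1` and `g(i) = R(k, (ℓ-1)g(i-1)+1) - 1` for `i ≥ 2`. -/
noncomputable def gfun (k l : ℕ) : ℕ → ℕ
  | 0 => 1
  | 1 => 1
  | (i + 2) => ramsey k ((l - 1) * gfun k l (i + 1) + 1) - 1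

/-- The function `f_{k,ℓ}(i) = R(k,ℓ) ⬝ g_{k,ℓ}(i)`. -/
noncomputable def ffun (k l i : ℕ) : ℕ := ramsey k l * gfun k l i

/-- A finite graph, encoded with vertex set `Fin n`. -/
abbrev FinGraph := Σ n : ℕ, SimpleGraph (Fin n)

/-- `G` is `𝓗`-free: no member of `𝓗` is an induced subgraph of `G`. -/
def HFree (𝓗 : Set FinGraph) {V : Type} (G : SimpleGraph V) : Prop :=
  ∀ H ∈ 𝓗, IsEmpty (H.2 ↪g G)

/-- Finite Ramsey theorem for subsets of a vertex set, by the usual double induction: split the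
remaining vertices into the neighbours and the non-neighbours of one vertex. -/
lemma exists_ramsey_bound (s : ℕ) : ∀ t : ℕ, ∃ N : ℕ, ∀ (V : Type) (G : SimpleGraph V)
    (A : Finset V), N ≤ #A →
      (∃ B ⊆ A, G.IsNClique s B) ∨ (∃ B ⊆ A, Gᶜ.IsNClique t B) := by
  classical
  induction s with
  | zero => exact fun t => ⟨0, fun V G A _ => Or.inl ⟨∅, by simp, by simp⟩⟩
  | succ s ihs =>
    intro t
    induction t with
    | zero => exact ⟨0, fun V G A _ => Or.inr ⟨∅, by simp, by simp⟩⟩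
    | succ t iht =>
      obtain ⟨N₁, h₁⟩ := ihs (t + 1)
      obtain ⟨N₂, h₂⟩ := iht
      refine ⟨N₁ + N₂ + 1, fun V G A hA => ?_⟩
      obtain ⟨v, hv⟩ : A.Nonempty := Finset.card_pos.mp (by omega)
      have hsplit := Finset.card_filter_add_card_filter_not (s := A.erase v) (fun x => G.Adj v x)
      rw [Finset.card_erase_of_mem hv] at hsplit
      have hsub : ∀ (q : V → Prop) [DecidablePred q], (A.erase v).filter q ⊆ A :=
        fun q _ => (Finset.filter_subset _ _).trans (Finset.erase_subset _ _)
      by_cases hN : N₁ ≤ #{x ∈ A.erase v | G.Adj v x}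
      · rcases h₁ V G _ hN with ⟨B, hB, hc⟩ | ⟨B, hB, hc⟩
        · refine Or.inl ⟨insert v B, Finset.insert_subset hv (hB.trans (hsub _)), ?_⟩
          exact hc.insert fun b hb => (Finset.mem_filter.mp (hB hb)).2
        · exact Or.inr ⟨B, hB.trans (hsub _), hc⟩
      · rcases h₂ V G {x ∈ A.erase v | ¬ G.Adj v x} (by omega) with ⟨B, hB, hc⟩ | ⟨B, hB, hc⟩
        · exact Or.inl ⟨B, hB.trans (hsub _), hc⟩
        · refine Or.inr ⟨insert v B, Finset.insert_subset hv (hB.trans (hsub _)), ?_⟩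
          refine hc.insert fun b hb => ?_
          have hb' := Finset.mem_filter.mp (hB hb)
          exact (SimpleGraph.compl_adj _ _ _).mpr
            ⟨(Finset.ne_of_mem_erase hb'.1).symm, hb'.2⟩

lemma ramseyProp_ramsey (s t : ℕ) : RamseyProp (ramsey s t) s t := by
  obtain ⟨N, hN⟩ := exists_ramsey_bound s t
  refine Nat.sInf_mem (s := {N | RamseyProp N s t}) ⟨N, fun G => ?_⟩
  rcases hN (Fin N) G Finset.univ (by simp) with ⟨B, -, hB⟩ | ⟨B, -, hB⟩
  · exact Or.inl ⟨B, hB⟩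
  · exact Or.inr ⟨B, hB⟩

/-- Positivity of `s` and `t` is needed: the empty set is a clique of size `0`. -/
lemma ramsey_pos {s t : ℕ} (hs : 0 < s) (ht : 0 < t) : 0 < ramsey s t := by
  rw [Nat.pos_iff_ne_zero]
  intro h0
  have h := ramseyProp_ramsey s t
  rw [h0] at h
  rcases h ⊥ with ⟨A, hA⟩ | ⟨A, hA⟩
  · have := hA.card_eq
    rw [Finset.eq_empty_of_isEmpty A, Finset.card_empty] at this
    omega
  · have := hA.card_eq
    rw [Finset.eq_empty_of_isEmpty A, Finset.card_empty] at this
    omega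

/-- A clique `f` with a matching `p` of pairwise non-adjacent private neighbours induces `K*_n`.
The vertices are automatically distinct. -/
lemma nonempty_Kstar_embedding {V : Type} {G : SimpleGraph V} {n : ℕ} (f p : Fin n → V)
    (hf : ∀ i j, i ≠ j → G.Adj (f i) (f j)) (hp : ∀ i j, ¬ G.Adj (p i) (p j))
    (hfp : ∀ i j, G.Adj (f i) (p j) ↔ i = j) : Nonempty (Kstar n ↪g G) := by
  have hne : ∀ i j, f i ≠ p j := fun i j h => hp j i (h ▸ (hfp i i).mpr rfl)
  have hpinj : ∀ i j, p i = p j → i = j := fun i j h => (hfp i j).mp (h ▸ (hfp i i).mpr rfl)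
  have hfinj : ∀ i j, f i = f j → i = j := fun i j h => (hfp i j).mp (h ▸ (hfp j j).mpr rfl)
  refine ⟨⟨⟨Sum.elim f p, ?_⟩, ?_⟩⟩
  · rintro (i | i) (j | j) h
    · exact congrArg _ (hfinj i j h)
    · exact (hne i j h).elim
    · exact (hne j i h.symm).elim
    · exact congrArg _ (hpinj i j h)
  · intro x y
    change G.Adj (Sum.elim f p x) (Sum.elim f p y) ↔ _
    rcases x with i | i <;> rcases y with j | j
    · by_cases hij : i = j
      · simp [hij]
      · simp [Kstar, hij, hf i j hij]
    · simp [Kstar, hfp]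
    · simp [Kstar, G.adj_comm (p i), hfp]
    · simp [Kstar, hp]

/-- An independent family `f` with a common neighbour `w` and a matching `p` of private neighbours
avoiding `w` and its neighbourhood induces `S*_n`. -/
lemma nonempty_Sstar_embedding {V : Type} {G : SimpleGraph V} {n : ℕ} (w : V) (f p : Fin n → V)
    (hf : ∀ i j, ¬ G.Adj (f i) (f j)) (hp : ∀ i j, ¬ G.Adj (p i) (p j))
    (hfp : ∀ i j, G.Adj (f i) (p j) ↔ i = j) (hwf : ∀ i, G.Adj w (f i))
    (hwp : ∀ i, ¬ G.Adj w (p i)) (hwne : ∀ i, w ≠ p i) : Nonempty (Sstar n ↪g G) := by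
  have hne : ∀ i j, f i ≠ p j := fun i j h => hp j i (h ▸ (hfp i i).mpr rfl)
  have hpinj : ∀ i j, p i = p j → i = j := fun i j h => (hfp i j).mp (h ▸ (hfp i i).mpr rfl)
  have hfinj : ∀ i j, f i = f j → i = j := fun i j h => (hfp i j).mp (h ▸ (hfp j j).mpr rfl)
  refine ⟨⟨⟨fun o => o.elim w (Sum.elim f p), ?_⟩, ?_⟩⟩
  · rintro (_ | i | i) (_ | j | j) h
    · rfl
    · exact ((hwf j).ne h).elim
    · exact (hwne j h).elim
    · exact ((hwf i).ne h.symm).elim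
    · rw [hfinj i j h]
    · exact (hne i j h).elim
    · exact (hwne i h.symm).elim
    · exact (hne j i h.symm).elim
    · rw [hpinj i j h]
  · intro x y
    change G.Adj (x.elim w (Sum.elim f p)) (y.elim w (Sum.elim f p)) ↔ _
    rcases x with _ | i | i <;> rcases y with _ | j | j
    · simp [Sstar]
    · simp [Sstar, hwf]
    · simp [Sstar, hwp]
    · simp [Sstar, (hwf i).symm]
    · simp [Sstar, hf]
    · simp [Sstar, hfp]
    · simp [Sstar, G.adj_comm (p i), hwp]
    · simp [Sstar, G.adj_comm (p i), hfp]
    · simp [Sstar, hp]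

/-- A vertex of a minimal dominating set `U` disjoint from the dominated set `X` has a private
neighbour: otherwise it could be removed from `U`. -/
lemma exists_private_neighbor {V : Type} {G : SimpleGraph V} {U X : Set V}
    (hdisj : ∀ u ∈ U, u ∉ X) (hUdom : Dominates G U X) (hUmin : ∀ S ⊂ U, ¬ Dominates G S X)
    {u : V} (hu : u ∈ U) : ∃ x ∈ X, ∀ u' ∈ U, G.Adj u' x ↔ u' = u := by
  have h := hUmin (U \ {u}) (Set.sdiff_singleton_ssubset.mpr hu)
  unfold Dominates at h
  push Not at h
  obtain ⟨x, hx, hx'⟩ := h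
  refine ⟨x, hx, fun u' hu' => ⟨fun hadj => ?_, ?_⟩⟩
  · by_contra hne
    exact (hx' u' ⟨hu', hne⟩).2 hadj
  · rintro rfl
    obtain ⟨v, hv, hvx⟩ := hUdom x hx
    rcases hvx with rfl | hvx
    · exact (hdisj _ hv hx).elim
    · by_cases hvu : v = u'
      · exact hvu ▸ hvx
      · exact ((hx' v ⟨hv, hvu⟩).2 hvx).elim

lemma not_adj_of_sphere {V : Type} {G : SimpleGraph V} {a v w : V} {i j : ℕ}
    (hv : v ∈ sphere G a i) (hw : w ∈ sphere G a j) (hij : i + 1 < j) : ¬ G.Adj v w := by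
  intro hadj
  obtain ⟨q, hq⟩ := hv.1.exists_walk_length_eq_dist
  have h := G.dist_le (q.concat hadj)
  rw [SimpleGraph.Walk.length_concat, hq, hv.2, hw.2] at h
  omega

lemma ne_of_sphere {V : Type} {G : SimpleGraph V} {a v w : V} {i j : ℕ}
    (hv : v ∈ sphere G a i) (hw : w ∈ sphere G a j) (hij : i ≠ j) : v ≠ w := by
  rintro rfl
  exact hij (hv.2.symm.trans hw.2)

/-- The induction step of Lemma 1: if every independent subset of `N^{i-1}_G(a)` is
dominated by at most `t` vertices of `N^{i-2}_G(a)`, then every minimal subset `U` of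
`N^{i-1}_G(a)` dominating an independent set `X ⊆ N^i_G(a)` satisfies
`|U| ≤ R(k, (ℓ-1)t + 1) - 1`. -/
theorem card_min_dominating_indep_le (k l i : ℕ) (hk : 0 < k) (hl : 0 < l) (hi : 2 ≤ i)
    (V : Type) [Fintype V] (G : SimpleGraph V)
    (hK : IsEmpty (Kstar k ↪g G)) (hS : IsEmpty (Sstar l ↪g G)) (a : V)
    (t : ℕ) (ht : 0 < t)
    (hdom : ∀ Y : Set V, Y ⊆ sphere G a (i - 1) → Indep G Y →
      ∃ W : Set V, W ⊆ sphere G a (i - 2) ∧ W.ncard ≤ t ∧ Dominates G W Y)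
    (X : Set V) (hXsub : X ⊆ sphere G a i) (hXind : Indep G X)
    (U : Set V) (hUsub : U ⊆ sphere G a (i - 1)) (hUdom : Dominates G U X)
    (hUmin : ∀ S ⊂ U, ¬ Dominates G S X) :
    U.ncard ≤ ramsey k ((l - 1) * t + 1) - 1 := by
  classical
  by_contra! hlt
  have hpos : 0 < ramsey k ((l - 1) * t + 1) := ramsey_pos hk (Nat.succ_pos _)
  have hcard : ramsey k ((l - 1) * t + 1) ≤ U.ncard := by omega
  have hdisj : ∀ u ∈ U, u ∉ X := fun u hu hx =>
    ne_of_sphere (hUsub hu) (hXsub hx) (by omega) rfl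
  have hXnadj : ∀ x ∈ X, ∀ y ∈ X, ¬ G.Adj x y := fun x hx y hy hadj =>
    hXind x hx y hy hadj.ne hadj
  obtain ⟨e⟩ : Nonempty (Fin (ramsey k ((l - 1) * t + 1)) ↪ U) := by
    apply Function.Embedding.nonempty_of_card_le
    rwa [Fintype.card_fin, ← Nat.card_eq_fintype_card, Nat.card_coe_set_eq]
  choose p hpX hp using fun m => exists_private_neighbor hdisj hUdom hUmin (e m).2
  have hep : ∀ m m', G.Adj (e m : V) (p m') ↔ m = m' := fun m m' => by
    rw [hp m' _ (e m).2, Subtype.coe_inj, e.injective.eq_iff]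
  rcases ramseyProp_ramsey k ((l - 1) * t + 1) (G.comap fun m => (e m : V)) with
    ⟨A, hA⟩ | ⟨B, hB⟩
  · let c := A.orderEmbOfFin hA.card_eq
    have hc : ∀ j, c j ∈ A := A.orderEmbOfFin_mem hA.card_eq
    obtain ⟨φ⟩ := nonempty_Kstar_embedding (fun j => (e (c j) : V)) (fun j => p (c j))
      (fun j j' hne => hA.isClique (hc j) (hc j') (c.injective.ne hne))
      (fun j j' => hXnadj _ (hpX _) _ (hpX _))
      (fun j j' => by rw [hep, c.injective.eq_iff])
    exact hK.false φ
  · have hBind : ∀ m ∈ B, ∀ m' ∈ B, ¬ G.Adj (e m : V) (e m') := by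
      intro m hm m' hm' hadj
      have hne : m ≠ m' := by
        rintro rfl
        exact hadj.ne rfl
      exact ((SimpleGraph.compl_adj _ _ _).mp (hB.isClique hm hm' hne)).2 hadj
    obtain ⟨W, hWsub, hWcard, hW⟩ := hdom ((fun m => (e m : V)) '' (B : Set _))
      (by
        rintro _ ⟨m, -, rfl⟩
        exact hUsub (e m).2)
      (by
        rintro _ ⟨m, hm, rfl⟩ _ ⟨m', hm', rfl⟩ -
        exact hBind m hm m' hm')
    have hWadj : ∀ m, ∃ w, m ∈ B → w ∈ W ∧ G.Adj w (e m) := by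
      intro m
      by_cases hm : m ∈ B
      · obtain ⟨w, hw, hwm⟩ := hW _ ⟨m, hm, rfl⟩
        refine ⟨w, fun _ => ⟨hw, hwm.resolve_left ?_⟩⟩
        exact ne_of_sphere (hWsub hw) (hUsub (e m).2) (by omega)
      · exact ⟨a, fun h => (hm h).elim⟩
    choose g hg using hWadj
    obtain ⟨w, hwW, hwcard⟩ := Finset.exists_lt_card_fiber_of_mul_lt_card_of_maps_to
      (s := B) (t := W.toFinite.toFinset) (f := g) (n := l - 1)
      (fun m hm => by simpa using (hg m hm).1)
      (by
        rw [hB.card_eq, ← Set.ncard_eq_toFinset_card W, mul_comm]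
        exact Nat.lt_succ_of_le (Nat.mul_le_mul_left _ hWcard))
    rw [Set.Finite.mem_toFinset] at hwW
    obtain ⟨D, hDsub, hDcard⟩ := Finset.exists_subset_card_eq (Nat.le_of_pred_lt hwcard)
    let c := D.orderEmbOfFin hDcard
    have hc : ∀ j, c j ∈ B ∧ g (c j) = w := fun j =>
      Finset.mem_filter.mp (hDsub (D.orderEmbOfFin_mem hDcard j))
    obtain ⟨φ⟩ := nonempty_Sstar_embedding w (fun j => (e (c j) : V)) (fun j => p (c j))
      (fun j j' => hBind _ (hc j).1 _ (hc j').1)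
      (fun j j' => hXnadj _ (hpX _) _ (hpX _))
      (fun j j' => by rw [hep, c.injective.eq_iff])
      (fun j => (hc j).2 ▸ (hg _ (hc j).1).2)
      (fun j => not_adj_of_sphere (hWsub hwW) (hXsub (hpX _)) (by omega))
      (fun j => ne_of_sphere (hWsub hwW) (hXsub (hpX _)) (by omega))
    exact hS.false φ
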